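/- (Arrow's Impossibility Theorem) Let V be a finite nonempty set of voters and X a set of alternatives with at least 3 elements. Then every social welfare function σ satisfying unanimity and independence is dictatorial. -/

import Mathlib

/-- A weak order: asymmetric and negatively transitive. -/
def IsWeakPref {X : Type*} (P : X → X → Prop) : Prop :=
  (∀ x y : X, P x y → ¬ P y x) ∧ ∀ x y z : X, ¬ P x y → ¬ P y z → ¬ P x z

/-- A profile assigns a weak order to every voter. -/
def IsProf {V X : Type*} (f : V → X → X → Prop) : Prop := ∀ v : V, IsWeakPref (f v)

/-- A collection of subsets of `V` is a filter: upward closed, closed under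
binary intersections, and proper. -/
def IsSetFilter {V : Type*} (F : Set (Set V)) : Prop :=
  (∀ A B : Set V, A ⊆ B → A ∈ F → B ∈ F) ∧
  (∀ A B : Set V, A ∈ F → B ∈ F → A ∩ B ∈ F) ∧
  (∅ : Set V) ∉ F

/-- An ultrafilter is a filter with no strictly finer filter. -/
def IsSetUltrafilter {V : Type*} (U : Set (Set V)) : Prop :=
  IsSetFilter U ∧ ∀ F : Set (Set V), IsSetFilter F → ¬ U ⊂ F

/-- Unanimity: a unanimous preference is respected by the verdict. -/
def Unanimity {V X : Type*} (σ : (V → X → X → Prop) → X → X → Prop) : Prop :=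
  ∀ (x y : X) (f : V → X → X → Prop), IsProf f → (∀ v : V, f v x y) → σ f x y

/-- Independence: profiles agreeing on `{x, y}` get verdicts agreeing on `{x, y}`. -/
def Independence {V X : Type*} (σ : (V → X → X → Prop) → X → X → Prop) : Prop :=
  ∀ (x y : X) (f g : V → X → X → Prop), IsProf f → IsProf g →
    (∀ v : V, (f v x y ↔ g v x y) ∧ (f v y x ↔ g v y x)) →
    ((σ f x y ↔ σ g x y) ∧ (σ f y x ↔ σ g y x))

/-- Dictatorship: a single voter's strict preferences are always followed. -/
def Dictatorial {V X : Type*} (σ : (V → X → X → Prop) → X → X → Prop) : Prop :=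
  ∃ v0 : V, ∀ (x y : X) (f : V → X → X → Prop), IsProf f → f v0 x y → σ f x y

/-- The ultrafilter `𝒰` is decisive for `σ`: every coalition in `𝒰` decides the verdict. -/
def Decisive {V X : Type*} (σ : (V → X → X → Prop) → X → X → Prop)
    (𝒰 : Set (Set V)) : Prop :=
  ∀ U ∈ 𝒰, ∀ (x y : X) (f : V → X → X → Prop), IsProf f →
    (∀ v ∈ U, f v x y) → σ f x y

/-!
Call a coalition decisive if the verdict follows it whenever its members agree on a pair of
distinct alternatives. A coalition that prevails over its unanimous opponents on a single pair is
already decisive: a third alternative lets unanimity, transitivity and independence carry its power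
to every other pair. Profiles on three alternatives then show that the decisive coalitions form an
ultrafilter. An ultrafilter on a finite set is principal, and its generator is the dictator.
-/

section WeakPref

variable {X : Type*} {P : X → X → Prop}

/-- The preference obtained from `P` by making `y` strictly worse than every other alternative. -/
def moveToBottom (y : X) (P : X → X → Prop) : X → X → Prop :=
  fun a b => b ≠ y ∧ (a = y ∨ P a b)

/-- The preference obtained from `P` by making `y` strictly better than every other alternative. -/
def moveToTop (y : X) (P : X → X → Prop) : X → X → Prop :=
  fun a b => a ≠ y ∧ (b = y ∨ P a b)

/-- The preference with `x` at the bottom, `z` at the top and all other alternatives tied in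
between. It serves to rank three given alternatives, the middle one being left implicit. -/
def bottomTop (x z : X) : X → X → Prop :=
  moveToBottom x (moveToTop z fun _ _ => False)

theorem IsWeakPref.trans (hP : IsWeakPref P) {x y z : X} (hxy : P x y) (hyz : P y z) : P x z := by
  by_contra hxz
  exact hP.2 x z y hxz (hP.1 y z hyz) hxy

theorem isWeakPref_false : IsWeakPref fun _ _ : X => False :=
  ⟨fun _ _ h => h.elim, fun _ _ _ h _ => h⟩

theorem isWeakPref_moveToBottom (hP : IsWeakPref P) (y : X) : IsWeakPref (moveToBottom y P) := by
  obtain ⟨hasymm, hneg⟩ := hP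
  constructor <;> grind [moveToBottom]

theorem isWeakPref_moveToTop (hP : IsWeakPref P) (y : X) : IsWeakPref (moveToTop y P) := by
  obtain ⟨hasymm, hneg⟩ := hP
  constructor <;> grind [moveToTop]

theorem isWeakPref_bottomTop (x z : X) : IsWeakPref (bottomTop x z) :=
  isWeakPref_moveToBottom (isWeakPref_moveToTop isWeakPref_false z) x

theorem bottomTop_iff {x z a b : X} :
    bottomTop x z a b ↔ b ≠ x ∧ (a = x ∨ a ≠ z ∧ b = z) := by
  simp [bottomTop, moveToBottom, moveToTop]

theorem exists_ne_ne_of_three (hX : ∃ a b c : X, a ≠ b ∧ a ≠ c ∧ b ≠ c) (x y : X) :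
    ∃ z, z ≠ x ∧ z ≠ y := by
  obtain ⟨a, b, c, hab, hac, hbc⟩ := hX
  by_contra! h
  have eq_or_eq (w : X) : w = x ∨ w = y := or_iff_not_imp_left.2 (h w)
  grind [eq_or_eq a, eq_or_eq b, eq_or_eq c]

end WeakPref

section Coalitions

variable {V X : Type*} {σ : (V → X → X → Prop) → X → X → Prop} {A B : Set V} {x y z : X}

/-- An Arrovian social welfare function: weak-order verdicts, unanimity and independence. -/
structure IsArrovian (σ : (V → X → X → Prop) → X → X → Prop) : Prop where
  isWeakPref : ∀ f, IsProf f → IsWeakPref (σ f)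
  unanimity : Unanimity σ
  independence : Independence σ

/-- The profile in which the voters of `A` keep their preferences from `f` and all others have those
from `g`. Unlike `Set.piecewise`, it needs no decidability of membership in `A`. -/
def combine (A : Set V) (f g : V → X → X → Prop) : V → X → X → Prop :=
  fun v a b => (v ∈ A ∧ f v a b) ∨ (v ∉ A ∧ g v a b)

/-- The coalition `A` is decisive for `y` over `x`: whatever the other voters think, the verdict
prefers `y` to `x` as soon as all of `A` does. -/
def DecisiveOver (σ : (V → X → X → Prop) → X → X → Prop) (A : Set V) (x y : X) : Prop :=
  ∀ f, IsProf f → (∀ v ∈ A, f v x y) → σ f x y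

/-- The coalition `A` is almost decisive for `y` over `x`: the verdict prefers `y` to `x` as soon
as all of `A` does and every other voter has the opposite preference. -/
def AlmostDecisiveOver (σ : (V → X → X → Prop) → X → X → Prop) (A : Set V) (x y : X) : Prop :=
  ∀ f, IsProf f → (∀ v ∈ A, f v x y) → (∀ v ∉ A, f v y x) → σ f x y

/-- The coalition `A` is decisive over every pair of distinct alternatives. -/
def DecisiveCoalition (σ : (V → X → X → Prop) → X → X → Prop) (A : Set V) : Prop :=
  ∀ x y, x ≠ y → DecisiveOver σ A x y

theorem combine_of_mem {v : V} (hv : v ∈ A) (f g : V → X → X → Prop) : combine A f g v = f v := by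
  funext a b
  simp [combine, hv]

theorem combine_of_notMem {v : V} (hv : v ∉ A) (f g : V → X → X → Prop) :
    combine A f g v = g v := by
  funext a b
  simp [combine, hv]

theorem isProf_combine {f g : V → X → X → Prop} (hf : IsProf f) (hg : IsProf g) (A : Set V) :
    IsProf (combine A f g) := fun v => by
  by_cases hv : v ∈ A
  · exact combine_of_mem hv f g ▸ hf v
  · exact combine_of_notMem hv f g ▸ hg v

theorem DecisiveOver.almostDecisiveOver (h : DecisiveOver σ A x y) : AlmostDecisiveOver σ A x y :=
  fun f hf hA _ => h f hf hA

theorem Independence.almostDecisiveOver (hI : Independence σ) {f : V → X → X → Prop}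
    (hf : IsProf f) (hA : ∀ v ∈ A, f v x y) (hAc : ∀ v ∉ A, f v y x) (hσ : σ f x y) :
    AlmostDecisiveOver σ A x y := by
  intro g hg gA gAc
  refine (hI x y f g hf hg fun v => ?_).1.1 hσ
  by_cases hv : v ∈ A
  · exact ⟨iff_of_true (hA v hv) (gA v hv),
      iff_of_false ((hf v).1 _ _ (hA v hv)) ((hg v).1 _ _ (gA v hv))⟩
  · exact ⟨iff_of_false ((hf v).1 _ _ (hAc v hv)) ((hg v).1 _ _ (gAc v hv)),
      iff_of_true (hAc v hv) (gAc v hv)⟩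

theorem AlmostDecisiveOver.decisiveOver_right (h : AlmostDecisiveOver σ A x y)
    (hσ : IsArrovian σ) (hxy : x ≠ y) (hzx : z ≠ x) (hzy : z ≠ y) : DecisiveOver σ A x z := by
  intro f hf hA
  let g : V → X → X → Prop :=
    combine A (fun _ => bottomTop x z) fun v => moveToBottom y (f v)
  have hg : IsProf g := isProf_combine (fun _ => isWeakPref_bottomTop x z)
    (fun v => isWeakPref_moveToBottom (hf v) y) A
  have hgxy : σ g x y := h g hg (by grind [combine, bottomTop_iff])
    (by grind [combine, moveToBottom])
  have hgyz : σ g y z := hσ.unanimity y z g hg (by grind [combine, bottomTop_iff, moveToBottom])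
  have hgxz : σ g x z := (hσ.isWeakPref g hg).trans hgxy hgyz
  have hgf : ∀ v, (g v x z ↔ f v x z) ∧ (g v z x ↔ f v z x) := fun v => by
    have := (hf v).1 x z
    grind [combine, bottomTop_iff, moveToBottom]
  exact (hσ.independence x z g f hg hf hgf).1.1 hgxz

theorem AlmostDecisiveOver.decisiveOver_left (h : AlmostDecisiveOver σ A x y)
    (hσ : IsArrovian σ) (hxy : x ≠ y) (hzx : z ≠ x) (hzy : z ≠ y) : DecisiveOver σ A z y := by
  intro f hf hA
  let g : V → X → X → Prop :=
    combine A (fun _ => bottomTop z y) fun v => moveToTop x (f v)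
  have hg : IsProf g := isProf_combine (fun _ => isWeakPref_bottomTop z y)
    (fun v => isWeakPref_moveToTop (hf v) x) A
  have hgxy : σ g x y := h g hg (by grind [combine, bottomTop_iff])
    (by grind [combine, moveToTop])
  have hgzx : σ g z x := hσ.unanimity z x g hg (by grind [combine, bottomTop_iff, moveToTop])
  have hgzy : σ g z y := (hσ.isWeakPref g hg).trans hgzx hgxy
  have hgf : ∀ v, (g v z y ↔ f v z y) ∧ (g v y z ↔ f v y z) := fun v => by
    have := (hf v).1 z y
    grind [combine, bottomTop_iff, moveToTop]
  exact (hσ.independence z y g f hg hf hgf).1.1 hgzy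

theorem AlmostDecisiveOver.decisiveCoalition (h : AlmostDecisiveOver σ A x y)
    (hσ : IsArrovian σ) (hX : ∃ a b c : X, a ≠ b ∧ a ≠ c ∧ b ≠ c) (hxy : x ≠ y) :
    DecisiveCoalition σ A := by
  have from_x : ∀ b, b ≠ x → DecisiveOver σ A x b := by
    intro b hbx
    by_cases hby : b = y
    · obtain ⟨c, hcx, hcy⟩ := exists_ne_ne_of_three hX x y
      have hxc : DecisiveOver σ A x c := h.decisiveOver_right hσ hxy hcx hcy
      exact hby ▸ hxc.almostDecisiveOver.decisiveOver_right hσ hcx.symm hxy.symm hcy.symm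
    · exact h.decisiveOver_right hσ hxy hbx hby
  have avoiding_x : ∀ a b, a ≠ b → a ≠ x → b ≠ x → DecisiveOver σ A a b :=
    fun a b hab hax hbx =>
      (from_x b hbx).almostDecisiveOver.decisiveOver_left hσ hbx.symm hax hab
  intro a b hab
  by_cases hax : a = x
  · subst hax
    exact from_x b hab.symm
  by_cases hbx : b = x
  · subst hbx
    obtain ⟨c, hcb, hca⟩ := exists_ne_ne_of_three hX b a
    exact (avoiding_x a c hca.symm hax hcb).almostDecisiveOver.decisiveOver_right hσ hca.symm
      hab.symm hcb.symm
  · exact avoiding_x a b hab hax hbx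

theorem Unanimity.decisiveCoalition_univ (hU : Unanimity σ) : DecisiveCoalition σ Set.univ :=
  fun x y _ f hf h => hU x y f hf fun v => h v (Set.mem_univ v)

theorem DecisiveCoalition.mono (hA : DecisiveCoalition σ A) (hAB : A ⊆ B) :
    DecisiveCoalition σ B :=
  fun x y hxy f hf hB => hA x y hxy f hf fun v hv => hB v (hAB hv)

theorem not_decisiveCoalition_empty [Nontrivial X]
    (hW : ∀ f : V → X → X → Prop, IsProf f → IsWeakPref (σ f)) :
    ¬ DecisiveCoalition σ ∅ := by
  intro h
  obtain ⟨x, y, hxy⟩ := exists_pair_ne X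
  let f : V → X → X → Prop := fun _ _ _ => False
  have hf : IsProf f := fun _ => isWeakPref_false
  exact (hW f hf).1 x y (h x y hxy f hf (by simp)) (h y x hxy.symm f hf (by simp))

theorem DecisiveCoalition.inter (hA : DecisiveCoalition σ A) (hB : DecisiveCoalition σ B)
    (hσ : IsArrovian σ) (hX : ∃ a b c : X, a ≠ b ∧ a ≠ c ∧ b ≠ c) :
    DecisiveCoalition σ (A ∩ B) := by
  have ⟨x, y, z, hxy, hxz, hyz⟩ := hX
  -- `A` wants `x < y` and `B` wants `y < z`, but only `A ∩ B` wants `x < z`.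
  let f : V → X → X → Prop :=
    combine A (combine B (fun _ => bottomTop x z) fun _ => bottomTop z y)
      (combine B (fun _ => bottomTop y x) fun _ => bottomTop z x)
  have hf : IsProf f := by
    apply_rules [isProf_combine] <;> exact fun _ => isWeakPref_bottomTop _ _
  have hfxy : σ f x y := hA x y hxy f hf (by grind [combine, bottomTop_iff])
  have hfyz : σ f y z := hB y z hyz f hf (by grind [combine, bottomTop_iff])
  have hfxz : σ f x z := (hσ.isWeakPref f hf).trans hfxy hfyz
  have hAB : AlmostDecisiveOver σ (A ∩ B) x z :=
    hσ.independence.almostDecisiveOver hf (by grind [combine, bottomTop_iff])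
      (by grind [combine, bottomTop_iff]) hfxz
  exact hAB.decisiveCoalition hσ hX hxz

theorem decisiveCoalition_or_compl (hσ : IsArrovian σ)
    (hX : ∃ a b c : X, a ≠ b ∧ a ≠ c ∧ b ≠ c) (A : Set V) :
    DecisiveCoalition σ A ∨ DecisiveCoalition σ Aᶜ := by
  have ⟨x, y, z, hxy, hxz, hyz⟩ := hX
  -- Everyone wants `y < z`, while `x` is below both for `A` and above both for `Aᶜ`. Since the
  -- verdict has `y < z`, it cannot have `z ≤ x ≤ y`.
  let f : V → X → X → Prop := combine A (fun _ => bottomTop x z) fun _ => bottomTop y x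
  have hf : IsProf f := isProf_combine (fun _ => isWeakPref_bottomTop x z)
    (fun _ => isWeakPref_bottomTop y x) A
  have hfyz : σ f y z := hσ.unanimity y z f hf (by grind [combine, bottomTop_iff])
  have hfx : σ f x z ∨ σ f y x := by
    by_contra! hx
    exact (hσ.isWeakPref f hf).2 y x z hx.2 hx.1 hfyz
  refine hfx.imp (fun hfxz => ?_) fun hfyx => ?_
  · have hA : AlmostDecisiveOver σ A x z :=
      hσ.independence.almostDecisiveOver hf (by grind [combine, bottomTop_iff])
        (by grind [combine, bottomTop_iff]) hfxz
    exact hA.decisiveCoalition hσ hX hxz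
  · have hAc : AlmostDecisiveOver σ Aᶜ y x :=
      hσ.independence.almostDecisiveOver hf (by grind [combine, bottomTop_iff])
        (by grind [combine, bottomTop_iff]) hfyx
    exact hAc.decisiveCoalition hσ hX hxy.symm

/-- The filter of decisive coalitions of an Arrovian social welfare function. -/
def decisiveFilter (hσ : IsArrovian σ) (hX : ∃ a b c : X, a ≠ b ∧ a ≠ c ∧ b ≠ c) :
    Filter V where
  sets := {A | DecisiveCoalition σ A}
  univ_sets := hσ.unanimity.decisiveCoalition_univ
  sets_of_superset hA hAB := hA.mono hAB
  inter_sets hA hB := hA.inter hB hσ hX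

theorem compl_notMem_decisiveFilter_iff (hσ : IsArrovian σ)
    (hX : ∃ a b c : X, a ≠ b ∧ a ≠ c ∧ b ≠ c) (A : Set V) :
    Aᶜ ∉ decisiveFilter hσ hX ↔ A ∈ decisiveFilter hσ hX := by
  refine ⟨(decisiveCoalition_or_compl hσ hX A).resolve_right, fun hA hAc => ?_⟩
  have : Nontrivial X := let ⟨a, b, _, hab, _⟩ := hX; ⟨a, b, hab⟩
  have hempty : DecisiveCoalition σ (A ∩ Aᶜ) := DecisiveCoalition.inter hA hAc hσ hX
  rw [Set.inter_compl_self] at hempty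
  exact not_decisiveCoalition_empty hσ.isWeakPref hempty

end Coalitions

/-- The Kirman–Sondermann theorem. On an infinite set of voters `𝒰` can be free. -/
theorem arrow_impossibility_general {V X : Type*}
    (hX : ∃ a b c : X, a ≠ b ∧ a ≠ c ∧ b ≠ c)
    (σ : (V → X → X → Prop) → X → X → Prop)
    (hW : ∀ f : V → X → X → Prop, IsProf f → IsWeakPref (σ f))
    (hU : Unanimity σ) (hI : Independence σ) :
    ∃ 𝒰 : Ultrafilter V, Decisive σ {A | A ∈ 𝒰} := by
  have hσ : IsArrovian σ := ⟨hW, hU, hI⟩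
  let 𝒰 : Ultrafilter V := .ofComplNotMemIff (decisiveFilter hσ hX)
    (compl_notMem_decisiveFilter_iff hσ hX)
  refine ⟨𝒰, fun A hA x y f hf hfA => ?_⟩
  have hxy : x ≠ y := by
    rintro rfl
    obtain ⟨v, hv⟩ := 𝒰.nonempty_of_mem hA
    exact (hf v).1 x x (hfA v hv) (hfA v hv)
  have hdec : DecisiveCoalition σ A := hA
  exact hdec x y hxy f hf hfA

/-- Arrow's Impossibility Theorem: over a finite nonempty set of voters,
every social welfare function satisfying unanimity and independence is dictatorial. -/
theorem arrow_impossibility {V X : Type*} [Finite V] [Nonempty V]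
    (hX : ∃ a b c : X, a ≠ b ∧ a ≠ c ∧ b ≠ c)
    (σ : (V → X → X → Prop) → X → X → Prop)
    (hW : ∀ f : V → X → X → Prop, IsProf f → IsWeakPref (σ f))
    (hU : Unanimity σ) (hI : Independence σ) :
    Dictatorial σ := by
  obtain ⟨𝒰, h𝒰⟩ := arrow_impossibility_general hX σ hW hU hI
  obtain ⟨v, rfl⟩ := 𝒰.eq_pure_of_finite
  exact ⟨v, fun x y f hf hv => h𝒰 {v} (Set.mem_singleton v) x y f hf fun _ hu => hu ▸ hv⟩
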